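/- arXiv:1701.00953 — 6 statements merged into one kernel-verified Lean document; each statement's English description precedes it below -/
import Mathlib

section
/- Let n ≥ 3 be an integer, ε > 0 and r₀ > e. Suppose f : [0,∞) → ℝ is a warping function (C², f(0)=0, f'(0)=1, f(r) > 0 and f''(r) ≥ 0 for all r > 0) satisfying f''(r) ≥ ((1/2 + ε)/(r² log r)) · f(r) for all r ≥ r₀. Then ∫₁^∞ f(s)^{n−3} (∫_s^∞ f(t)^{1−n} dt) ds < ∞; in particular, for every s ≥ 1 the inner integral ∫_s^∞ f(t)^{1−n} dt is finite. -/
open MeasureTheory Set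

/-- Sturm-type comparison: `f ≥ c r (log r + T)^b` for large `r`. -/
lemma sturm_lower (ε r₀ : ℝ) (hε : 0 < ε) (hr₀ : Real.exp 1 < r₀)
    (f : ℝ → ℝ) (hf : ContDiff ℝ 2 f) (hf0 : f 0 = 0)
    (hfpos : ∀ r > (0:ℝ), 0 < f r) (hfconv : ∀ r > (0:ℝ), 0 ≤ deriv (deriv f) r)
    (hcurv : ∀ r ≥ r₀, ((1/2 + ε) / (r ^ 2 * Real.log r)) * f r ≤ deriv (deriv f) r) :
    ∃ b c T r₁ : ℝ, 1/2 < b ∧ 0 < c ∧ 0 ≤ T ∧ Real.exp 1 < r₁ ∧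
      ∀ r ≥ r₁, c * (r * (Real.log r + T) ^ b) ≤ f r := by
  have he : (1:ℝ) < Real.exp 1 := by simp
  have hd1 : ∀ r, HasDerivAt f (deriv f r) r := fun r =>
    (hf.differentiable (by norm_num) r).hasDerivAt
  have hf1 : ContDiff ℝ 1 (deriv f) := by
    have : ContDiff ℝ (1+1) f := by simpa [one_add_one_eq_two] using hf
    exact (contDiff_succ_iff_deriv.1 this).2.2
  have hd2 : ∀ r, HasDerivAt (deriv f) (deriv (deriv f) r) r := fun r =>
    (hf1.differentiable (by norm_num) r).hasDerivAt
  have hlog : ∀ r ≥ r₀, 1 < Real.log r := fun r hr => by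
    rw [Real.lt_log_iff_exp_lt (by linarith)]; linarith
  have hdw : ∀ r, HasDerivAt (fun r => r * deriv f r - f r) (r * deriv (deriv f) r) r := by
    intro r
    have := ((hasDerivAt_id r).mul (hd2 r)).sub (hd1 r)
    refine this.congr_deriv ?_
    simp
  have hwc : Continuous (fun r => r * deriv f r - f r) :=
    continuous_iff_continuousAt.2 fun r => (hdw r).continuousAt
  have hwm : MonotoneOn (fun r => r * deriv f r - f r) (Ici 0) := by
    refine monotoneOn_of_deriv_nonneg (convex_Ici 0) hwc.continuousOn
      (fun r _ => (hdw r).differentiableAt.differentiableWithinAt) ?_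
    intro r hr
    rw [interior_Ici] at hr
    rw [(hdw r).deriv]
    exact mul_nonneg (le_of_lt hr) (hfconv r hr)
  have hws : StrictMonoOn (fun r => r * deriv f r - f r) (Ici r₀) := by
    refine strictMonoOn_of_deriv_pos (convex_Ici r₀) hwc.continuousOn ?_
    intro r hr
    rw [interior_Ici] at hr
    have hr' : r₀ < r := hr
    rw [(hdw r).deriv]
    have h0 : 0 < r := by linarith
    have := hcurv r hr'.le
    have h1 := hlog r hr'.le
    have h2 := hfpos r h0
    refine mul_pos h0 (lt_of_lt_of_le ?_ this)
    positivity
  obtain ⟨r₁, hr₁⟩ : ∃ r₁, r₁ = r₀ + 1 := ⟨_, rfl⟩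
  have hw1 : 0 < r₁ * deriv f r₁ - f r₁ := by
    have h1 := hwm (a := 0) (b := r₀) (by simp) (by simp; linarith) (by linarith)
    have h2 := hws (a := r₀) (b := r₁) (by simp) (by simp; linarith) (by linarith)
    simp only [hf0] at h1 h2
    linarith
  have hr1p : 0 < r₁ := by linarith
  obtain ⟨b, hb⟩ : ∃ b, b = 1/2 + min ε (1/2) := ⟨_, rfl⟩
  have hb1 : b ≤ 1 := by have := min_le_right ε (1/2); linarith
  have hb2 : b ≤ 1/2 + ε := by have := min_le_left ε (1/2); linarith
  have hb3 : 1/2 < b := by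
    have : 0 < min ε (1/2) := lt_min hε (by norm_num)
    linarith
  obtain ⟨T, hT⟩ : ∃ T, T = b * f r₁ / (r₁ * deriv f r₁ - f r₁) := ⟨_, rfl⟩
  have hfr1 := hfpos r₁ hr1p
  have hT0 : 0 ≤ T := by rw [hT]; positivity
  obtain ⟨g, hg⟩ : ∃ g : ℝ → ℝ, g = fun r => r * (Real.log r + T) ^ b := ⟨_, rfl⟩
  obtain ⟨g', hg'⟩ : ∃ g' : ℝ → ℝ, g' = fun r => (Real.log r + T) ^ b + b * (Real.log r + T) ^ (b-1) :=
    ⟨_, rfl⟩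
  have hls : ∀ r ≥ r₁, 1 < Real.log r := fun r hr => hlog r (by linarith)
  have hds : ∀ r ≥ r₁, ∀ p : ℝ, HasDerivAt (fun r => (Real.log r + T) ^ p)
      (p * (Real.log r + T) ^ (p-1) / r) r := by
    intro r hr p
    have h1 := hls r hr
    have := ((Real.hasDerivAt_log (x := r) (by linarith)).add_const T).rpow_const (p := p)
      (Or.inl (by linarith))
    refine this.congr_deriv ?_
    field_simp
  have hdg : ∀ r ≥ r₁, HasDerivAt g (g' r) r := by
    intro r hr
    have h0 : r ≠ 0 := by linarith
    rw [hg, hg']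
    refine ((hasDerivAt_id r).mul (hds r hr b)).congr_deriv ?_
    simp only [id]
    field_simp
  have hdg' : ∀ r ≥ r₁, HasDerivAt g'
      ((b * (Real.log r + T) ^ (b-1) + b * ((b-1) * (Real.log r + T) ^ (b-1-1))) / r) r := by
    intro r hr
    have h0 : r ≠ 0 := by linarith
    rw [hg']
    refine ((hds r hr b).add ((hds r hr (b-1)).const_mul b)).congr_deriv ?_
    field_simp
  have hgpos : ∀ r ≥ r₁, 0 < g r := by
    intro r hr
    have h1 := hls r hr
    rw [hg]
    have : 0 < r := by linarith
    positivity
  have hg2 : ∀ r ≥ r₁, ((b * (Real.log r + T) ^ (b-1) +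
      b * ((b-1) * (Real.log r + T) ^ (b-1-1))) / r) ≤ ((1/2 + ε) / (r ^ 2 * Real.log r)) * g r := by
    intro r hr
    have h1 := hls r hr
    have h0 : 0 < r := by linarith
    have hs : 0 < Real.log r + T := by linarith
    have e1 : (Real.log r + T) ^ (b-1) = (Real.log r + T) ^ b / (Real.log r + T) := by
      rw [Real.rpow_sub hs, Real.rpow_one]
    have hneg : b * ((b-1) * (Real.log r + T) ^ (b-1-1)) ≤ 0 := by
      have : 0 ≤ (Real.log r + T) ^ (b-1-1) := by positivity
      have : (b-1) * (Real.log r + T) ^ (b-1-1) ≤ 0 :=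
        mul_nonpos_of_nonpos_of_nonneg (by linarith) this
      exact mul_nonpos_of_nonneg_of_nonpos (by linarith) this
    have hP : 0 < (Real.log r + T) ^ b := by positivity
    calc _ ≤ (b * (Real.log r + T) ^ (b-1)) / r := by gcongr; linarith
      _ = (Real.log r + T) ^ b / r * (b / (Real.log r + T)) := by rw [e1]; field_simp
      _ ≤ (Real.log r + T) ^ b / r * ((1/2+ε) / (Real.log r)) := by gcongr; linarith
      _ = _ := by rw [hg]; field_simp
  -- the Wronskian
  have hdW : ∀ r ≥ r₁, HasDerivAt (fun r => deriv f r * g r - f r * g' r)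
      (deriv (deriv f) r * g r - f r * ((b * (Real.log r + T) ^ (b-1) +
      b * ((b-1) * (Real.log r + T) ^ (b-1-1))) / r)) r := by
    intro r hr
    refine (((hd2 r).mul (hdg r hr)).sub ((hd1 r).mul (hdg' r hr))).congr_deriv ?_
    ring
  have hWm : MonotoneOn (fun r => deriv f r * g r - f r * g' r) (Ici r₁) := by
    refine monotoneOn_of_deriv_nonneg (convex_Ici r₁)
      (fun r hr => (hdW r hr).continuousAt.continuousWithinAt)
      (fun r hr => (hdW r (interior_subset hr)).differentiableAt.differentiableWithinAt) ?_
    intro r hr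
    have hr' : r₁ ≤ r := interior_subset hr
    rw [(hdW r hr').deriv]
    have h1 := hcurv r (by linarith)
    have h2 := hg2 r hr'
    have h3 := hgpos r hr'
    have h4 := hfpos r (by linarith)
    have h5 := mul_le_mul_of_nonneg_right h1 h3.le
    have h6 := mul_le_mul_of_nonneg_left h2 h4.le
    nlinarith
  have hW1 : 0 ≤ deriv f r₁ * g r₁ - f r₁ * g' r₁ := by
    have h1 := hls r₁ le_rfl
    have hs : 0 < Real.log r₁ + T := by linarith
    have e1 : (Real.log r₁ + T) ^ (b-1) = (Real.log r₁ + T) ^ b / (Real.log r₁ + T) := by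
      rw [Real.rpow_sub hs, Real.rpow_one]
    have hP : 0 < (Real.log r₁ + T) ^ b := by positivity
    have e2 : deriv f r₁ * g r₁ - f r₁ * g' r₁ = (Real.log r₁ + T) ^ b *
        ((r₁ * deriv f r₁ - f r₁) - b * f r₁ / (Real.log r₁ + T)) := by
      simp only [hg, hg']; rw [e1]; ring
    rw [e2]
    refine mul_nonneg hP.le (sub_nonneg.2 ?_)
    rw [div_le_iff₀ hs]
    have : T * (r₁ * deriv f r₁ - f r₁) = b * f r₁ := by
      rw [hT]; field_simp
    nlinarith
  have hdq : ∀ r ≥ r₁, HasDerivAt (fun r => f r / g r)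
      ((deriv f r * g r - f r * g' r) / g r ^ 2) r := fun r hr =>
    (hd1 r).div (hdg r hr) (hgpos r hr).ne'
  have hqm : MonotoneOn (fun r => f r / g r) (Ici r₁) := by
    refine monotoneOn_of_deriv_nonneg (convex_Ici r₁)
      (fun r hr => (hdq r hr).continuousAt.continuousWithinAt)
      (fun r hr => (hdq r (interior_subset hr)).differentiableAt.differentiableWithinAt) ?_
    intro r hr
    have hr' : r₁ ≤ r := interior_subset hr
    rw [(hdq r hr').deriv]
    have := hWm (a := r₁) (b := r) (by simp) hr' hr'
    simp only at this
    have : 0 ≤ deriv f r * g r - f r * g' r := by linarith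
    positivity
  refine ⟨b, f r₁ / g r₁, T, r₁, hb3, div_pos hfr1 (hgpos r₁ le_rfl), hT0, by linarith, ?_⟩
  intro r hr
  have := hqm (a := r₁) (b := r) (by simp) hr hr
  simp only at this
  rw [le_div_iff₀ (hgpos r hr)] at this
  simpa [hg] using this

/-- `1/(t (log t + T)^{2b})` is integrable at infinity when `b > 1/2`. -/
lemma integrable_log (b T r₁ : ℝ) (hb : 1/2 < b) (hT : 0 ≤ T) (hr : Real.exp 1 < r₁) :
    IntegrableOn (fun t => (t * (Real.log t + T) ^ (2*b))⁻¹) (Ioi r₁) := by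
  have he : (1:ℝ) < Real.exp 1 := by simp
  have hls : ∀ r ≥ r₁, 0 < Real.log r + T := fun r h => by
    have : 0 < Real.log r := Real.log_pos (by linarith)
    linarith
  have hlim : Filter.Tendsto (fun t => (Real.log t + T) ^ (-(2*b-1)) / (1-2*b)) Filter.atTop
      (nhds (0 / (1-2*b))) := by
    refine Filter.Tendsto.div_const ?_ _
    exact (tendsto_rpow_neg_atTop (by linarith)).comp
      (Filter.tendsto_atTop_add_const_right _ _ Real.tendsto_log_atTop)
  refine integrableOn_Ioi_deriv_of_nonneg' (a := r₁) (l := 0 / (1-2*b))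
    (g := fun t => (Real.log t + T) ^ (-(2*b-1)) / (1-2*b)) ?_ ?_ hlim
  · intro t ht
    have ht' : r₁ ≤ t := ht
    have h0 : t ≠ 0 := by linarith
    have hs := hls t ht
    have := (((Real.hasDerivAt_log h0).add_const T).rpow_const (p := -(2*b-1))
      (Or.inl hs.ne')).div_const (1-2*b)
    refine this.congr_deriv ?_
    have h1 : (1-2*b) ≠ 0 := by linarith
    rw [show -(2*b-1) - 1 = -(2*b) by ring, Real.rpow_neg hs.le]
    have : (Real.log t + T) ^ (2*b) ≠ 0 := by positivity
    field_simp
    ring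
  · intro t ht
    have ht' : r₁ < t := ht
    have hs := hls t ht'.le
    have h0 : 0 < t := by linarith
    positivity

/-- For a warping function `f` (C², f(0)=0, f'(0)=1, f>0 and f''≥0 on (0,∞))
satisfying the curvature bound `f''(r) ≥ ((1/2+ε)/(r² log r)) f(r)` for `r ≥ r₀ > e`,
the integral `∫₁^∞ f(s)^{n-3} (∫ₛ^∞ f(t)^{1-n} dt) ds` is finite; in particular every inner
integral is finite. -/
theorem stmt_0 (n : ℕ) (hn : 3 ≤ n) (ε r₀ : ℝ) (hε : 0 < ε) (hr₀ : Real.exp 1 < r₀)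
    (f : ℝ → ℝ) (hf : ContDiff ℝ 2 f) (hf0 : f 0 = 0) (hf'0 : deriv f 0 = 1)
    (hfpos : ∀ r > (0:ℝ), 0 < f r) (hfconv : ∀ r > (0:ℝ), 0 ≤ deriv (deriv f) r)
    (hcurv : ∀ r ≥ r₀, ((1/2 + ε) / (r ^ 2 * Real.log r)) * f r ≤ deriv (deriv f) r) :
    (∫⁻ s in Ioi (1:ℝ),
        ENNReal.ofReal (f s ^ ((n : ℝ) - 3)) *
          ∫⁻ t in Ioi s, ENNReal.ofReal (f t ^ (1 - (n : ℝ)))) < ⊤ ∧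
      ∀ s ≥ (1:ℝ), (∫⁻ t in Ioi s, ENNReal.ofReal (f t ^ (1 - (n : ℝ)))) < ⊤ := by
  have he : (1:ℝ) < Real.exp 1 := by simp
  have hn' : (3:ℝ) ≤ n := by exact_mod_cast hn
  have hd1 : ∀ r, HasDerivAt f (deriv f r) r := fun r =>
    (hf.differentiable (by norm_num) r).hasDerivAt
  have hf1 : ContDiff ℝ 1 (deriv f) := by
    have : ContDiff ℝ (1+1) f := by simpa [one_add_one_eq_two] using hf
    exact (contDiff_succ_iff_deriv.1 this).2.2
  have hdm : MonotoneOn (deriv f) (Ici 0) := by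
    refine monotoneOn_of_deriv_nonneg (convex_Ici 0) hf1.continuous.continuousOn
      (hf1.differentiable (by norm_num)).differentiableOn ?_
    intro r hr
    rw [interior_Ici] at hr
    exact hfconv r hr
  have hfm : MonotoneOn f (Ici 0) := by
    refine monotoneOn_of_deriv_nonneg (convex_Ici 0) hf.continuous.continuousOn
      (hf.differentiable (by norm_num)).differentiableOn ?_
    intro r hr
    rw [interior_Ici] at hr
    have hr' : 0 < r := hr
    have := hdm (a := 0) (b := r) (by simp) hr'.le hr'.le
    linarith
  obtain ⟨b, c, T, r₁, hb, hc, hT, hr₁, hlow⟩ := sturm_lower ε r₀ hε hr₀ f hf hf0 hfpos hfconv hcurv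
  have hint : IntegrableOn (fun t => t * (f t ^ 2)⁻¹) (Ioi 1) := by
    have h1 : IntegrableOn (fun t => t * (f t ^ 2)⁻¹) (Icc 1 r₁) := by
      refine ContinuousOn.integrableOn_Icc ?_
      refine continuousOn_id.mul (ContinuousOn.inv₀ (hf.continuous.pow 2).continuousOn ?_)
      intro t ht
      have := hfpos t (by linarith [ht.1])
      positivity
    have h2 : IntegrableOn (fun t => t * (f t ^ 2)⁻¹) (Ioi r₁) := by
      refine Integrable.mono' ((integrable_log b T r₁ hb hT hr₁).const_mul (c^2)⁻¹) ?_ ?_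
      · have := hf.continuous.measurable
        exact (by fun_prop : Measurable (fun t => t * (f t ^ 2)⁻¹)).aestronglyMeasurable
      · refine (ae_restrict_mem measurableSet_Ioi).mono ?_
        intro t ht
        have ht' : r₁ < t := ht
        have h0 : 0 < t := by linarith
        have hl : 0 < Real.log t := Real.log_pos (by linarith)
        have hs : 0 < Real.log t + T := by linarith
        have hft := hfpos t h0
        rw [Real.norm_of_nonneg (by positivity)]
        have hP : 0 < (Real.log t + T) ^ b := by positivity
        have e1 : (Real.log t + T) ^ (2*b) = ((Real.log t + T) ^ b)^2 := by
          rw [mul_comm, Real.rpow_mul hs.le]; norm_num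
        calc t * (f t ^ 2)⁻¹ ≤ t * ((c * (t * (Real.log t + T) ^ b)) ^ 2)⁻¹ := by
              gcongr; exact hlow t ht'.le
          _ = _ := by rw [e1]; field_simp
    refine (h1.union h2).mono_set ?_
    intro t ht
    have ht' : (1:ℝ) < t := ht
    rcases le_or_gt t r₁ with h | h
    · exact Or.inl ⟨ht'.le, h⟩
    · exact Or.inr h
  have hI : (∫⁻ t in Ioi (1:ℝ), ENNReal.ofReal (t * (f t ^ 2)⁻¹)) < ⊤ := by
    have := hint.hasFiniteIntegral
    rw [hasFiniteIntegral_iff_ofReal] at this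
    · exact this
    · refine (ae_restrict_mem measurableSet_Ioi).mono ?_
      intro t ht
      have ht' : (1:ℝ) < t := ht
      have : 0 ≤ t := by linarith
      simp only [Pi.zero_apply]
      positivity
  have hmf := hf.continuous.measurable
  have hkey : ∀ s ≥ (1:ℝ), ∀ t ∈ Ioi s,
      ENNReal.ofReal (f s ^ ((n : ℝ) - 3)) * ENNReal.ofReal (f t ^ (1 - (n : ℝ))) ≤
        ENNReal.ofReal ((f t ^ 2)⁻¹) := by
    intro s hs t ht
    have ht' : s < t := ht
    have hfs := hfpos s (by linarith)
    have hft := hfpos t (by linarith)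
    have hle := hfm (a := s) (b := t) (by simp; linarith) (by simp; linarith) ht'.le
    rw [← ENNReal.ofReal_mul (by positivity)]
    refine ENNReal.ofReal_le_ofReal ?_
    calc _ ≤ f t ^ ((n : ℝ) - 3) * f t ^ (1 - (n : ℝ)) := by
          gcongr
      _ = f t ^ (-2 : ℝ) := by rw [← Real.rpow_add hft]; congr 1; ring
      _ = _ := by rw [Real.rpow_neg hft.le]; norm_num
  have hA : ∀ s ≥ (1:ℝ), ENNReal.ofReal (f s ^ ((n : ℝ) - 3)) *
      (∫⁻ t in Ioi s, ENNReal.ofReal (f t ^ (1 - (n : ℝ)))) ≤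
      ∫⁻ t in Ioi s, ENNReal.ofReal ((f t ^ 2)⁻¹) := by
    intro s hs
    rw [← lintegral_const_mul _ (by fun_prop)]
    exact setLIntegral_mono (by fun_prop) (hkey s hs)
  constructor
  · refine lt_of_le_of_lt ?_ hI
    calc _ ≤ ∫⁻ s in Ioi (1:ℝ), ∫⁻ t in Ioi s, ENNReal.ofReal ((f t ^ 2)⁻¹) :=
          setLIntegral_mono' measurableSet_Ioi (fun s hs => hA s (le_of_lt hs))
      _ = ∫⁻ s in Ioi (1:ℝ), ∫⁻ t in Ioi (1:ℝ),
            {p : ℝ × ℝ | p.1 < p.2}.indicator (fun p => ENNReal.ofReal ((f p.2 ^ 2)⁻¹)) (s, t) := by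
          refine setLIntegral_congr_fun measurableSet_Ioi ?_
          intro s hs
          have hs' : (1:ℝ) < s := hs
          have : (fun t => {p : ℝ × ℝ | p.1 < p.2}.indicator
              (fun p => ENNReal.ofReal ((f p.2 ^ 2)⁻¹)) (s, t)) =
              (Ioi s).indicator (fun t => ENNReal.ofReal ((f t ^ 2)⁻¹)) := by
            ext t; simp [indicator]
          simp only [this]
          rw [lintegral_indicator measurableSet_Ioi, Measure.restrict_restrict measurableSet_Ioi,
            Ioi_inter_Ioi, sup_eq_left.2 hs'.le]
      _ = ∫⁻ t in Ioi (1:ℝ), ∫⁻ s in Ioi (1:ℝ),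
            {p : ℝ × ℝ | p.1 < p.2}.indicator (fun p => ENNReal.ofReal ((f p.2 ^ 2)⁻¹)) (s, t) := by
          refine lintegral_lintegral_swap (Measurable.aemeasurable ?_)
          refine Measurable.indicator (by fun_prop) (measurableSet_lt measurable_fst measurable_snd)
      _ ≤ _ := by
          refine setLIntegral_mono' measurableSet_Ioi ?_
          intro t ht
          have ht' : (1:ℝ) < t := ht
          have : (fun s => {p : ℝ × ℝ | p.1 < p.2}.indicator
              (fun p => ENNReal.ofReal ((f p.2 ^ 2)⁻¹)) (s, t)) =
              (Iio t).indicator (fun _ => ENNReal.ofReal ((f t ^ 2)⁻¹)) := by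
            ext s; simp [indicator]
          rw [this, lintegral_indicator_const measurableSet_Iio,
            Measure.restrict_apply measurableSet_Iio, Iio_inter_Ioi, Real.volume_Ioo, mul_comm,
            ← ENNReal.ofReal_mul (by linarith)]
          refine ENNReal.ofReal_le_ofReal ?_
          gcongr
          linarith
  · intro s hs
    have hfs := hfpos s (by linarith)
    have h1 : ENNReal.ofReal (f s ^ ((n : ℝ) - 3)) *
        (∫⁻ t in Ioi s, ENNReal.ofReal (f t ^ (1 - (n : ℝ)))) < ⊤ := by
      refine lt_of_le_of_lt (hA s hs) (lt_of_le_of_lt ?_ hI)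
      refine (setLIntegral_mono' (g := fun t => ENNReal.ofReal (t * (f t ^ 2)⁻¹))
        measurableSet_Ioi ?_).trans (lintegral_mono_set (Ioi_subset_Ioi hs))
      intro t ht
      have ht' : s < t := ht
      refine ENNReal.ofReal_le_ofReal (le_mul_of_one_le_left (by positivity) (by linarith))
    rcases ENNReal.mul_lt_top_iff.1 h1 with h | h | h
    · exact h.2
    · have : 0 < f s ^ ((n : ℝ) - 3) := by positivity
      rw [ENNReal.ofReal_eq_zero] at h
      linarith
    · rw [h]; simp
end

section
/- Let ε > 0 and r₀ > e. Suppose f : [0,∞) → ℝ is a warping function (C², f(0)=0, f'(0)=1, f(r) > 0 and f''(r) ≥ 0 for all r > 0) satisfying f''(r) ≥ ((1 + ε)/(r² log r)) · f(r) for all r ≥ r₀. Then ∫₁^∞ f(s)^{−1} (∫_s^∞ f(t)^{−1} dt) ds < ∞; in particular, for every s ≥ 1 the inner integral ∫_s^∞ f(t)^{−1} dt is finite. -/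
open MeasureTheory Set

lemma aux_lower (ε r₀ : ℝ) (hε : 0 < ε) (hr₀ : Real.exp 1 < r₀)
    (f : ℝ → ℝ) (hf : ContDiff ℝ 2 f) (hf0 : f 0 = 0)
    (hfpos : ∀ r > (0:ℝ), 0 < f r) (hfconv : ∀ r > (0:ℝ), 0 ≤ deriv (deriv f) r)
    (hcurv : ∀ r ≥ r₀, ((1 + ε) / (r ^ 2 * Real.log r)) * f r ≤ deriv (deriv f) r) :
    ∃ a > (1:ℝ), ∃ c > (0:ℝ), ∀ r ≥ r₀, c * (r * Real.log r ^ a) ≤ f r := by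
  have hd1 : ∀ x, HasDerivAt f (deriv f x) x := fun x =>
    (hf.differentiable (by norm_num) x).hasDerivAt
  have hf1 : ContDiff ℝ 1 (deriv f) := by
    have h2 : ContDiff ℝ (1 + 1) f := by simpa [one_add_one_eq_two] using hf
    exact (contDiff_succ_iff_deriv.1 h2).2.2
  have hd2 : ∀ x, HasDerivAt (deriv f) (deriv (deriv f) x) x := fun x =>
    (hf1.differentiable (by norm_num) x).hasDerivAt
  have hr0 : 0 < r₀ := (Real.exp_pos 1).trans hr₀
  have hlog : ∀ r ≥ r₀, 1 < Real.log r := fun r hr =>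
    (Real.lt_log_iff_exp_lt (hr0.trans_le hr)).2 (hr₀.trans_le hr)
  have hp : f r₀ ≤ r₀ * deriv f r₀ := by
    have hder : ∀ x, HasDerivAt (fun x => x * deriv f x - f x) (x * deriv (deriv f) x) x := by
      intro x
      have := ((hasDerivAt_id x).mul (hd2 x)).sub (hd1 x)
      refine this.congr_deriv ?_
      simp
    have hm : MonotoneOn (fun x => x * deriv f x - f x) (Ici 0) := by
      refine monotoneOn_of_deriv_nonneg (convex_Ici 0)
        (fun x _ => (hder x).continuousAt.continuousWithinAt)
        (fun x _ => (hder x).differentiableAt.differentiableWithinAt) ?_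
      intro x hx
      rw [interior_Ici, mem_Ioi] at hx
      rw [(hder x).deriv]
      exact mul_nonneg hx.le (hfconv x hx)
    have := hm (mem_Ici.2 le_rfl) (mem_Ici.2 hr0.le) hr0.le
    simp only [hf0] at this
    linarith
  obtain ⟨a, ha1, ha2⟩ : ∃ a : ℝ, 1 < a ∧ a * a = 1 + ε := by
    refine ⟨Real.sqrt (1 + ε), ?_, Real.mul_self_sqrt (by linarith)⟩
    exact Real.lt_sqrt_of_sq_lt (by linarith)
  set B : ℝ := a * r₀ * Real.log r₀ ^ (a - 1) with hB
  have hBpos : 0 < B := by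
    have := hlog r₀ le_rfl
    positivity
  let g : ℝ → ℝ := fun x => x * Real.log x ^ a + B
  let g1 : ℝ → ℝ := fun x => Real.log x ^ a + a * Real.log x ^ (a - 1)
  let g2 : ℝ → ℝ := fun x => (a * Real.log x ^ (a - 1) + a * (a - 1) * Real.log x ^ (a - 2)) / x
  have hpw : ∀ (b : ℝ), ∀ x ≥ r₀, HasDerivAt (fun x => Real.log x ^ b)
      (b * Real.log x ^ (b - 1) / x) x := by
    intro b x hx
    have hl := hlog x hx
    have := (Real.hasDerivAt_log (hr0.trans_le hx).ne').rpow_const (p := b) (Or.inl (by linarith))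
    refine this.congr_deriv ?_
    ring
  have hg : ∀ x ≥ r₀, HasDerivAt g (g1 x) x := by
    intro x hx
    have hx0 : x ≠ 0 := (hr0.trans_le hx).ne'
    have := ((hasDerivAt_id x).mul (hpw a x hx)).add_const B
    refine this.congr_deriv ?_
    simp only [g1, id]
    field_simp
  have hg1 : ∀ x ≥ r₀, HasDerivAt g1 (g2 x) x := by
    intro x hx
    have hx0 : x ≠ 0 := (hr0.trans_le hx).ne'
    have := (hpw a x hx).add ((hpw (a - 1) x hx).const_mul a)
    refine this.congr_deriv ?_
    simp only [g2]
    rw [show a - 1 - 1 = a - 2 by ring]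
    ring
  have hgpos : ∀ x ≥ r₀, 0 < g x := by
    intro x hx
    have := hlog x hx
    have hx0 : 0 < x := hr0.trans_le hx
    simp only [g]; positivity
  have hg2 : ∀ x ≥ r₀, g2 x ≤ ((1 + ε) / (x ^ 2 * Real.log x)) * g x := by
    intro x hx
    have hl := hlog x hx
    have hx0 : 0 < x := hr0.trans_le hx
    have hl0 : 0 < Real.log x := by linarith
    have e1 : Real.log x ^ (a - 1) = Real.log x ^ (a - 2) * Real.log x := by
      rw [← Real.rpow_add_one hl0.ne']; congr 1; ring
    have e2 : Real.log x ^ a = Real.log x ^ (a - 2) * Real.log x * Real.log x := by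
      rw [← e1, ← Real.rpow_add_one hl0.ne']; congr 1; ring
    have hu : 0 < Real.log x ^ (a - 2) := by positivity
    simp only [g2, g]
    rw [e1, e2, ← ha2, div_mul_eq_mul_div, div_le_div_iff₀ hx0 (by positivity)]
    set u := Real.log x ^ (a - 2)
    set l := Real.log x
    have k1 : 0 ≤ a * (a - 1) * u * (l - 1) * (x ^ 2 * l) := by
      have : 0 ≤ a - 1 := by linarith
      have : 0 ≤ l - 1 := by linarith
      positivity
    have k2 : 0 ≤ a * a * B * x := by positivity
    nlinarith [k1, k2]
  have hW : ∀ x ≥ r₀, HasDerivAt (fun x => deriv f x * g x - f x * g1 x)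
      (deriv (deriv f) x * g x - f x * g2 x) x := by
    intro x hx
    have := ((hd2 x).mul (hg x hx)).sub ((hd1 x).mul (hg1 x hx))
    refine this.congr_deriv ?_
    ring
  have hWmono : MonotoneOn (fun x => deriv f x * g x - f x * g1 x) (Ici r₀) := by
    refine monotoneOn_of_deriv_nonneg (convex_Ici _)
      (fun x hx => (hW x hx).continuousAt.continuousWithinAt)
      (fun x hx => (hW x (interior_subset hx)).differentiableAt.differentiableWithinAt) ?_
    intro x hx
    have hx := interior_subset hx
    rw [(hW x hx).deriv]
    have h1 := mul_le_mul_of_nonneg_right (hcurv x hx) (hgpos x hx).le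
    have h2 := mul_le_mul_of_nonneg_left (hg2 x hx) (hfpos x (hr0.trans_le hx)).le
    linarith
  have hW0 : 0 ≤ deriv f r₀ * g r₀ - f r₀ * g1 r₀ := by
    have hl := hlog r₀ le_rfl
    have e : g r₀ = r₀ * g1 r₀ := by simp only [g, g1, hB]; ring
    have h1 : 0 ≤ g1 r₀ := by simp only [g1]; positivity
    rw [e]
    nlinarith [mul_le_mul_of_nonneg_right hp h1]
  have hQ : ∀ x ≥ r₀, HasDerivAt (fun x => f x / g x)
      ((deriv f x * g x - f x * g1 x) / g x ^ 2) x := fun x hx =>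
    (hd1 x).div (hg x hx) (hgpos x hx).ne'
  have hQmono : MonotoneOn (fun x => f x / g x) (Ici r₀) := by
    refine monotoneOn_of_deriv_nonneg (convex_Ici _)
      (fun x hx => (hQ x hx).continuousAt.continuousWithinAt)
      (fun x hx => (hQ x (interior_subset hx)).differentiableAt.differentiableWithinAt) ?_
    intro x hx
    have hx := interior_subset hx
    rw [(hQ x hx).deriv]
    exact div_nonneg (hW0.trans (hWmono (mem_Ici.2 le_rfl) hx hx)) (sq_nonneg _)
  refine ⟨a, ha1, f r₀ / g r₀, div_pos (hfpos _ hr0) (hgpos _ le_rfl), fun r hr => ?_⟩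
  have h1 : f r₀ / g r₀ ≤ f r / g r := hQmono (mem_Ici.2 le_rfl) hr hr
  rw [le_div_iff₀ (hgpos r hr)] at h1
  refine le_trans ?_ h1
  exact mul_le_mul_of_nonneg_left (by simp only [g]; linarith)
    (div_pos (hfpos _ hr0) (hgpos _ le_rfl)).le

lemma aux_int (a r₀ : ℝ) (ha : 1 < a) (hr₀ : Real.exp 1 < r₀) :
    IntegrableOn (fun r : ℝ => (r * Real.log r ^ a)⁻¹) (Ioi r₀) := by
  have hr0 : 0 < r₀ := (Real.exp_pos 1).trans hr₀
  have hlog : ∀ r ≥ r₀, 1 < Real.log r := fun r hr =>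
    (Real.lt_log_iff_exp_lt (hr0.trans_le hr)).2 (hr₀.trans_le hr)
  have hd : ∀ x ∈ Ici r₀, HasDerivAt (fun x => -(Real.log x ^ (-(a - 1)) / (a - 1)))
      ((x * Real.log x ^ a)⁻¹) x := by
    intro x hx
    have hl := hlog x hx
    have hx0 : 0 < x := hr0.trans_le hx
    have := (((Real.hasDerivAt_log hx0.ne').rpow_const (p := -(a - 1))
      (Or.inl (by linarith))).div_const (a - 1)).neg
    refine this.congr_deriv ?_
    have ha' : a - 1 ≠ 0 := by linarith
    rw [show -(a - 1) - 1 = -a by ring, Real.rpow_neg (by linarith)]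
    have : Real.log x ^ a ≠ 0 := by positivity
    field_simp
  refine integrableOn_Ioi_deriv_of_nonneg' (l := -(0 / (a - 1))) hd ?_ ?_
  · intro x hx
    have hl := hlog x (le_of_lt hx)
    have hx0 : 0 < x := hr0.trans hx
    positivity
  · exact (((tendsto_rpow_neg_atTop (by linarith)).comp Real.tendsto_log_atTop).div_const _).neg

/-- For a warping function `f` (C², f(0)=0, f'(0)=1, f>0 and f''≥0 on (0,∞))
satisfying the curvature bound `f''(r) ≥ ((1+ε)/(r² log r)) f(r)` for `r ≥ r₀ > e`,
the integral `∫₁^∞ f(s)⁻¹ (∫ₛ^∞ f(t)⁻¹ dt) ds` is finite; in particular every inner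
integral is finite. -/
theorem stmt_1 (ε r₀ : ℝ) (hε : 0 < ε) (hr₀ : Real.exp 1 < r₀)
    (f : ℝ → ℝ) (hf : ContDiff ℝ 2 f) (hf0 : f 0 = 0) (hf'0 : deriv f 0 = 1)
    (hfpos : ∀ r > (0:ℝ), 0 < f r) (hfconv : ∀ r > (0:ℝ), 0 ≤ deriv (deriv f) r)
    (hcurv : ∀ r ≥ r₀, ((1 + ε) / (r ^ 2 * Real.log r)) * f r ≤ deriv (deriv f) r) :
    (∫⁻ s in Ioi (1:ℝ),
        ENNReal.ofReal ((f s)⁻¹) * ∫⁻ t in Ioi s, ENNReal.ofReal ((f t)⁻¹)) < ⊤ ∧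
      ∀ s ≥ (1:ℝ), (∫⁻ t in Ioi s, ENNReal.ofReal ((f t)⁻¹)) < ⊤ := by
  have hr0 : 0 < r₀ := (Real.exp_pos 1).trans hr₀
  have hr1 : 1 ≤ r₀ := (Real.one_le_exp zero_le_one).trans hr₀.le
  obtain ⟨a, ha, c, hc, hlow⟩ := aux_lower ε r₀ hε hr₀ f hf hf0 hfpos hfconv hcurv
  have hlog : ∀ r ≥ r₀, 1 < Real.log r := fun r hr =>
    (Real.lt_log_iff_exp_lt (hr0.trans_le hr)).2 (hr₀.trans_le hr)
  have hi1 : IntegrableOn (fun t => (f t)⁻¹) (Ioc 1 r₀) := by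
    refine (ContinuousOn.integrableOn_Icc ?_).mono_set Ioc_subset_Icc_self
    exact hf.continuous.continuousOn.inv₀ fun x hx => (hfpos x (by linarith [hx.1])).ne'
  have hi2 : IntegrableOn (fun t => (f t)⁻¹) (Ioi r₀) := by
    refine Integrable.mono' ((aux_int a r₀ ha hr₀).const_mul c⁻¹)
      (hf.continuous.measurable.inv.aestronglyMeasurable) ?_
    refine (ae_restrict_iff' measurableSet_Ioi).2 (Filter.Eventually.of_forall fun x hx => ?_)
    have hx' : r₀ ≤ x := le_of_lt hx
    have hl := hlog x hx'
    have hx0 : 0 < x := hr0.trans hx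
    rw [Real.norm_of_nonneg (inv_pos.2 (hfpos x hx0)).le, ← mul_inv]
    exact inv_anti₀ (by positivity) (hlow x hx')
  have hi : IntegrableOn (fun t => (f t)⁻¹) (Ioi 1) := by
    rw [← Ioc_union_Ioi_eq_Ioi hr1]
    exact hi1.union hi2
  have hfin : (∫⁻ t in Ioi (1:ℝ), ENNReal.ofReal ((f t)⁻¹)) < ⊤ := Integrable.lintegral_lt_top hi
  have hmono : ∀ s ≥ (1:ℝ), (∫⁻ t in Ioi s, ENNReal.ofReal ((f t)⁻¹)) ≤
      ∫⁻ t in Ioi (1:ℝ), ENNReal.ofReal ((f t)⁻¹) := fun s hs =>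
    lintegral_mono_set (Ioi_subset_Ioi hs)
  refine ⟨?_, fun s hs => (hmono s hs).trans_lt hfin⟩
  calc _ ≤ ∫⁻ s in Ioi (1:ℝ), ENNReal.ofReal ((f s)⁻¹) *
        ∫⁻ t in Ioi (1:ℝ), ENNReal.ofReal ((f t)⁻¹) := by
        refine setLIntegral_mono' measurableSet_Ioi fun s hs => ?_
        gcongr
        exact le_of_lt hs
    _ = (∫⁻ s in Ioi (1:ℝ), ENNReal.ofReal ((f s)⁻¹)) *
        ∫⁻ t in Ioi (1:ℝ), ENNReal.ofReal ((f t)⁻¹) :=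
        lintegral_mul_const _ hf.continuous.measurable.inv.ennreal_ofReal
    _ < ⊤ := ENNReal.mul_lt_top hfin hfin
end

section
/- Let n ≥ 3 be an integer, let p be a real with 2 < p < n, set α = −(n−1)/(p−1) and β = (n−2p+1)/(p−1) (so α + β = −2), and let ε > 0, r₀ > e. Suppose f : [0,∞) → ℝ is a warping function (C², f(0)=0, f'(0)=1, f(r) > 0 and f''(r) ≥ 0 for all r > 0) satisfying f''(r) ≥ ((1/2 + ε)/(r² log r)) · f(r) for all r ≥ r₀. Then ∫₁^∞ f(s)^{β} (∫_s^∞ f(t)^{α} dt) ds < ∞. -/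
open MeasureTheory Set

lemma aux_basic (f : ℝ → ℝ) (hf : ContDiff ℝ 2 f) (hf0 : f 0 = 0) (hf'0 : deriv f 0 = 1)
    (hfconv : ∀ r > (0:ℝ), 0 ≤ deriv (deriv f) r) :
    (∀ r ≥ (0:ℝ), r ≤ f r) ∧ (∀ s t : ℝ, 0 < s → s ≤ t → f s / s * t ≤ f t) := by
  have hd : Differentiable ℝ f := hf.differentiable (by norm_num)
  have hf1 : ContDiff ℝ 1 (deriv f) := by
    have : ContDiff ℝ (1+1) f := by simpa [one_add_one_eq_two] using hf
    exact ((contDiff_succ_iff_deriv (n := 1)).1 this).2.2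
  have hd1 : Differentiable ℝ (deriv f) := hf1.differentiable (by norm_num)
  have hmono : MonotoneOn (deriv f) (Ici 0) := by
    apply monotoneOn_of_deriv_nonneg (convex_Ici 0) hd1.continuous.continuousOn
      hd1.differentiableOn
    intro x hx
    rw [interior_Ici] at hx
    exact hfconv x hx
  have hconv : ConvexOn ℝ (Ici 0) f := by
    apply MonotoneOn.convexOn_of_deriv (convex_Ici 0) hd.continuous.continuousOn
      hd.differentiableOn
    exact hmono.mono interior_subset
  refine ⟨?_, ?_⟩
  · have hm : MonotoneOn (fun r => f r - r) (Ici 0) := by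
      apply monotoneOn_of_deriv_nonneg (convex_Ici 0)
        (hd.continuous.sub continuous_id).continuousOn
        (hd.sub differentiable_id).differentiableOn
      intro x hx
      rw [interior_Ici] at hx
      have h1 : HasDerivAt (fun r => f r - r) (deriv f x - 1) x :=
        (hd x).hasDerivAt.sub (hasDerivAt_id x)
      rw [show f - id = (fun r => f r - r) from rfl, h1.deriv]
      have := hmono (show (0:ℝ) ∈ Ici 0 by simp) (show x ∈ Ici 0 from le_of_lt (mem_Ioi.1 hx)) (le_of_lt (mem_Ioi.1 hx))
      rw [hf'0] at this
      linarith
    intro r hr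
    have := hm (show (0:ℝ) ∈ Ici 0 by simp) (hr : r ∈ Ici 0) hr
    simp only [hf0] at this
    linarith
  · intro s t hs hst
    have ht : 0 < t := hs.trans_le hst
    have h := hconv.2 (show t ∈ Ici (0:ℝ) from ht.le) (show (0:ℝ) ∈ Ici 0 by simp)
      (show 0 ≤ s/t by positivity) (show 0 ≤ 1 - s/t by
        rw [sub_nonneg]; exact (div_le_one ht).2 hst) (by ring)
    simp only [smul_eq_mul, hf0, mul_zero, add_zero] at h
    rw [div_mul_cancel₀ _ ht.ne'] at h
    calc f s / s * t ≤ (s / t * f t) / s * t := by gcongr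
      _ = f t := by field_simp

lemma aux_growth (ε r₀ a : ℝ) (ha0 : 1/2 < a) (ha1 : a ≤ 1) (haε : a < 1/2 + ε)
    (hr₀ : Real.exp 1 < r₀)
    (f : ℝ → ℝ) (hf : ContDiff ℝ 2 f) (hfr : ∀ r ≥ (0:ℝ), r ≤ f r)
    (hcurv : ∀ r ≥ r₀, ((1/2 + ε) / (r ^ 2 * Real.log r)) * f r ≤ deriv (deriv f) r) :
    ∃ R C : ℝ, r₀ ≤ R ∧ 0 < C ∧ ∀ r ≥ R, C * (r * Real.log r ^ a) ≤ f r := by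
  have hd : Differentiable ℝ f := hf.differentiable (by norm_num)
  have hf1 : ContDiff ℝ 1 (deriv f) := by
    have : ContDiff ℝ (1+1) f := by simpa [one_add_one_eq_two] using hf
    exact ((contDiff_succ_iff_deriv (n := 1)).1 this).2.2
  have hd1 : Differentiable ℝ (deriv f) := hf1.differentiable (by norm_num)
  have hpos : ∀ r ≥ r₀, 1 < r ∧ 1 ≤ Real.log r := by
    intro r hr
    have h1 : Real.exp 1 < r := hr₀.trans_le hr
    have h2 : (1:ℝ) < Real.exp 1 := by simp
    refine ⟨h2.trans h1, ?_⟩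
    rw [Real.le_log_iff_exp_le (by linarith)]
    exact h1.le
  set g : ℝ → ℝ := fun r => r * Real.log r ^ a with hg
  set g1 : ℝ → ℝ := fun r => Real.log r ^ a + a * Real.log r ^ (a-1) with hg1
  set g2 : ℝ → ℝ := fun r => (a * Real.log r ^ (a-1) + a * ((a-1) * Real.log r ^ (a-1-1))) / r
    with hg2
  have hpow : ∀ b : ℝ, ∀ r ≥ r₀, HasDerivAt (fun r => Real.log r ^ b)
      (r⁻¹ * b * Real.log r ^ (b-1)) r := by
    intro b r hr
    obtain ⟨h1, h2⟩ := hpos r hr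
    exact (Real.hasDerivAt_log (by linarith)).rpow_const (Or.inl (by linarith))
  have hgd : ∀ r ≥ r₀, HasDerivAt g (g1 r) r := by
    intro r hr
    obtain ⟨h1, h2⟩ := hpos r hr
    have := (hasDerivAt_id r).mul (hpow a r hr)
    refine HasDerivAt.congr_deriv this ?_
    simp only [hg1, id]
    field_simp
  have hg1d : ∀ r ≥ r₀, HasDerivAt g1 (g2 r) r := by
    intro r hr
    obtain ⟨h1, h2⟩ := hpos r hr
    have := (hpow a r hr).add ((hpow (a-1) r hr).const_mul a)
    refine HasDerivAt.congr_deriv this ?_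
    simp only [hg2]
    field_simp
  have hgpos : ∀ r ≥ r₀, 0 < g r := by
    intro r hr
    obtain ⟨h1, h2⟩ := hpos r hr
    have : 0 < Real.log r := by linarith
    simp only [hg]; positivity
  set δ := 1/2 + ε - a with hδ
  have hδpos : 0 < δ := by linarith
  set V : ℝ → ℝ := fun r => (deriv f r * g r - f r * g1 r) - δ * Real.log r with hV
  have hVd : ∀ r ≥ r₀, HasDerivAt V ((deriv (deriv f) r * g r + deriv f r * g1 r
      - (deriv f r * g1 r + f r * g2 r)) - δ * r⁻¹) r := by
    intro r hr
    obtain ⟨h1, h2⟩ := hpos r hr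
    exact (((hd1 r).hasDerivAt.mul (hgd r hr)).sub ((hd r).hasDerivAt.mul (hg1d r hr))).sub
      ((Real.hasDerivAt_log (by linarith)).const_mul δ)
  have hVm : MonotoneOn V (Ici r₀) := by
    apply monotoneOn_of_deriv_nonneg (convex_Ici r₀)
      (fun x hx => (hVd x hx).continuousAt.continuousWithinAt)
      (fun x hx => (hVd x (interior_subset hx)).differentiableAt.differentiableWithinAt)
    intro r hr
    have hr : r ≥ r₀ := interior_subset hr
    rw [(hVd r hr).deriv]
    obtain ⟨h1, h2⟩ := hpos r hr
    have hL : 0 < Real.log r := by linarith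
    have hr0 : 0 < r := by linarith
    have hfr' := hfr r hr0.le
    have hlogr : Real.log r ≤ r := Real.log_le_self hr0.le
    have e1 : Real.log r ^ a = Real.log r ^ (a-1) * Real.log r := by
      rw [Real.rpow_sub_one hL.ne']; field_simp
    set P := Real.log r ^ (a-1) with hP
    have hPpos : 0 < P := by positivity
    have hPge : r⁻¹ ≤ P := by
      calc r⁻¹ ≤ (Real.log r)⁻¹ := by gcongr
        _ = Real.log r ^ (-1:ℝ) := (Real.rpow_neg_one _).symm
        _ ≤ P := Real.rpow_le_rpow_of_exponent_le h2 (by linarith)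
    have hA : (1/2+ε) * P / r * f r ≤ deriv (deriv f) r * g r := by
      calc (1/2+ε) * P / r * f r = ((1/2 + ε) / (r ^ 2 * Real.log r)) * f r * g r := by
            simp only [hg, e1]; field_simp
        _ ≤ _ := mul_le_mul_of_nonneg_right (hcurv r hr) (hgpos r hr).le
    have hB : f r * g2 r ≤ a * P / r * f r := by
      have : g2 r ≤ a * P / r := by
        simp only [hg2]
        apply div_le_div_of_nonneg_right _ hr0.le
        have : 0 ≤ Real.log r ^ (a-1-1) := by positivity
        have h3 : (a-1) * Real.log r ^ (a-1-1) ≤ 0 :=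
          mul_nonpos_of_nonpos_of_nonneg (by linarith) this
        nlinarith
      rw [mul_comm]
      exact mul_le_mul_of_nonneg_right this (by linarith)
    have hC : δ * r⁻¹ ≤ δ * P / r * f r := by
      calc δ * r⁻¹ ≤ δ * P := by gcongr
        _ = δ * P / r * r := by field_simp
        _ ≤ _ := by gcongr
    have : δ * P / r * f r = (1/2+ε) * P / r * f r - a * P / r * f r := by
      rw [hδ]; ring
    linarith
  obtain ⟨R, hR0, hRr⟩ : ∃ R, r₀ ≤ R ∧ ∀ r ≥ R, 0 ≤ V r₀ + δ * Real.log r := by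
    have := (Real.tendsto_log_atTop.const_mul_atTop hδpos).eventually_ge_atTop (- V r₀)
    obtain ⟨R, hR⟩ := Filter.eventually_atTop.1 this
    refine ⟨max R r₀, le_max_right _ _, fun r hr => ?_⟩
    have := hR r (le_trans (le_max_left _ _) hr)
    linarith
  have hqd : ∀ r ≥ R, HasDerivAt (fun r => f r / g r)
      ((deriv f r * g r - f r * g1 r) / g r ^ 2) r := fun r hr =>
    (hd r).hasDerivAt.div (hgd r (hR0.trans hr)) (hgpos r (hR0.trans hr)).ne'
  have hqm : MonotoneOn (fun r => f r / g r) (Ici R) := by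
    apply monotoneOn_of_deriv_nonneg (convex_Ici R)
      (fun x hx => (hqd x hx).continuousAt.continuousWithinAt)
      (fun x hx => (hqd x (interior_subset hx)).differentiableAt.differentiableWithinAt)
    intro r hr
    have hr : r ≥ R := interior_subset hr
    rw [(hqd r hr).deriv]
    apply div_nonneg _ (sq_nonneg _)
    have h1 := hVm (show r₀ ∈ Ici r₀ by simp) (show r ∈ Ici r₀ from hR0.trans hr) (hR0.trans hr)
    have h2 := hRr r hr
    have h3 : V r = (deriv f r * g r - f r * g1 r) - δ * Real.log r := rfl
    linarith
  refine ⟨R, f R / g R, hR0, ?_, ?_⟩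
  · have := hpos R hR0
    exact div_pos (lt_of_lt_of_le (by linarith) (hfr R (by linarith))) (hgpos R hR0)
  · intro r hr
    have h1 := hqm (show R ∈ Ici R by simp) (show r ∈ Ici R from hr) hr
    exact (le_div_iff₀ (hgpos r (hR0.trans hr))).1 h1

lemma aux_log_int (R a : ℝ) (hR : 1 < R) (ha : 1/2 < a) :
    IntegrableOn (fun r : ℝ => r⁻¹ * Real.log r ^ (-(2*a))) (Ioi R) := by
  have hd : ∀ x ∈ Ici R, HasDerivAt (fun r => (1/(1-2*a)) * Real.log r ^ (1-2*a))
      (x⁻¹ * Real.log x ^ (-(2*a))) x := by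
    intro x hx
    have hx : R ≤ x := hx
    have hL : 0 < Real.log x := Real.log_pos (by linarith)
    have := ((Real.hasDerivAt_log (x := x) (by linarith)).rpow_const
      (p := 1 - 2*a) (Or.inl hL.ne')).const_mul (1/(1-2*a))
    refine HasDerivAt.congr_deriv this ?_
    have h : 1 - 2*a ≠ 0 := by linarith
    rw [show 1 - 2*a - 1 = -(2*a) by ring]
    field_simp
  apply integrableOn_Ioi_deriv_of_nonneg' hd (l := (1/(1-2*a)) * 0)
  · intro x hx
    have hx : R < x := hx
    have hL : 0 < Real.log x := Real.log_pos (by linarith)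
    have : 0 < x := by linarith
    positivity
  · have h : Filter.Tendsto (fun x : ℝ => x ^ (-(2*a-1))) Filter.atTop (nhds 0) :=
      tendsto_rpow_neg_atTop (by linarith)
    have h2 := h.comp Real.tendsto_log_atTop
    simp only [neg_sub] at h2
    exact h2.const_mul _

lemma aux_inner (α β : ℝ) (hα : α < -1) (hαβ : α + β = -2) (f : ℝ → ℝ)
    (hfpos : ∀ r > (0:ℝ), 0 < f r)
    (hm : ∀ s t : ℝ, 0 < s → s ≤ t → f s / s * t ≤ f t) (s : ℝ) (hs : 0 < s) :
    ENNReal.ofReal (f s ^ β) * ∫⁻ t in Ioi s, ENNReal.ofReal (f t ^ α)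
      ≤ ENNReal.ofReal ((-(α+1))⁻¹ * (s / f s ^ 2)) := by
  have hfs := hfpos s hs
  have h1 : ∫⁻ t in Ioi s, ENNReal.ofReal (f t ^ α)
      ≤ ∫⁻ t in Ioi s, ENNReal.ofReal ((f s / s) ^ α * t ^ α) := by
    apply setLIntegral_mono' measurableSet_Ioi
    intro t ht
    have ht : s < t := ht
    have ht0 : 0 < t := hs.trans ht
    apply ENNReal.ofReal_le_ofReal
    rw [← Real.mul_rpow (by positivity) ht0.le]
    exact Real.rpow_le_rpow_of_nonpos (by positivity) (hm s t hs ht.le) (by linarith)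
  have h2 : ∫⁻ t in Ioi s, ENNReal.ofReal ((f s / s) ^ α * t ^ α)
      = ENNReal.ofReal ((f s / s) ^ α * (-s ^ (α+1) / (α+1))) := by
    rw [← integral_Ioi_rpow_of_lt hα hs, ← integral_const_mul,
      ofReal_integral_eq_lintegral_ofReal]
    · exact (integrableOn_Ioi_rpow_of_lt hα hs).const_mul _
    · filter_upwards [ae_restrict_mem measurableSet_Ioi] with t ht
      have ht : s < t := ht
      have ht0 : 0 < t := hs.trans ht
      simp only [Pi.zero_apply]
      positivity
  calc _ ≤ ENNReal.ofReal (f s ^ β) * ENNReal.ofReal ((f s / s) ^ α * (-s ^ (α+1) / (α+1))) := by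
        rw [← h2]; gcongr
    _ = ENNReal.ofReal (f s ^ β * ((f s / s) ^ α * (-s ^ (α+1) / (α+1)))) :=
        (ENNReal.ofReal_mul (by positivity)).symm
    _ = _ := by
        congr 1
        rw [Real.div_rpow hfs.le hs.le, Real.rpow_add_one hs.ne']
        have e : f s ^ β * f s ^ α = (f s ^ 2)⁻¹ := by
          rw [← Real.rpow_add hfs, add_comm, hαβ, Real.rpow_neg hfs.le]
          norm_num
        have h3 : α + 1 ≠ 0 := by linarith
        have h4 : s ^ α ≠ 0 := by positivity
        calc _ = (f s ^ β * f s ^ α) * (s ^ α / s ^ α) * s * (-(α+1)⁻¹) := by ring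
          _ = _ := by rw [e, div_self h4, ← inv_neg]; ring



/-- For `2 < p < n`, `α = -(n-1)/(p-1)`, `β = (n-2p+1)/(p-1)` and a warping
function `f` satisfying the curvature bound `f''(r) ≥ ((1/2+ε)/(r² log r)) f(r)` for
`r ≥ r₀ > e`, the integral `∫₁^∞ f(s)^β (∫ₛ^∞ f(t)^α dt) ds` is finite. -/
theorem stmt_2 (n : ℕ) (hn : 3 ≤ n) (p : ℝ) (hp : 2 < p) (hpn : p < n)
    (α β : ℝ) (hα : α = -((n : ℝ) - 1) / (p - 1)) (hβ : β = ((n : ℝ) - 2 * p + 1) / (p - 1))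
    (ε r₀ : ℝ) (hε : 0 < ε) (hr₀ : Real.exp 1 < r₀)
    (f : ℝ → ℝ) (hf : ContDiff ℝ 2 f) (hf0 : f 0 = 0) (hf'0 : deriv f 0 = 1)
    (hfpos : ∀ r > (0:ℝ), 0 < f r) (hfconv : ∀ r > (0:ℝ), 0 ≤ deriv (deriv f) r)
    (hcurv : ∀ r ≥ r₀, ((1/2 + ε) / (r ^ 2 * Real.log r)) * f r ≤ deriv (deriv f) r) :
    (∫⁻ s in Ioi (1:ℝ),
        ENNReal.ofReal (f s ^ β) * ∫⁻ t in Ioi s, ENNReal.ofReal (f t ^ α)) < ⊤ := by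

  obtain ⟨hfr, hm⟩ := aux_basic f hf hf0 hf'0 hfconv
  have hp1 : 0 < p - 1 := by linarith
  have hα1 : α < -1 := by
    rw [hα, div_lt_iff₀ hp1]; linarith
  have hαβ : α + β = -2 := by
    rw [hα, hβ]; field_simp; ring
  obtain ⟨a, ha0, ha1, haε⟩ : ∃ a : ℝ, 1/2 < a ∧ a ≤ 1 ∧ a < 1/2 + ε := by
    refine ⟨min 1 (1/2 + ε/2), lt_min (by norm_num) (by linarith), min_le_left _ _, ?_⟩
    exact (min_le_right _ _).trans_lt (by linarith)
  obtain ⟨R, C, hR0, hC, hfC⟩ := aux_growth ε r₀ a ha0 ha1 haε hr₀ f hf hfr hcurv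
  have hR1 : 1 < R := by
    have h2 : (1:ℝ) < Real.exp 1 := by simp
    linarith
  have hcont : Continuous f := hf.continuous
  have hint1 : IntegrableOn (fun s => s / f s ^ 2) (Ioc 1 R) := by
    apply IntegrableOn.mono_set _ Ioc_subset_Icc_self
    apply ContinuousOn.integrableOn_Icc
    apply continuousOn_id.div (hcont.pow 2).continuousOn
    intro x hx
    exact pow_ne_zero _ (hfpos x (lt_of_lt_of_le one_pos hx.1)).ne'
  have hint2 : IntegrableOn (fun s => s / f s ^ 2) (Ioi R) := by
    have h := (aux_log_int R a hR1 ha0).const_mul ((C^2)⁻¹)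
    refine Integrable.mono' h ?_ ?_
    · exact (measurable_id.div (hcont.measurable.pow_const 2)).aestronglyMeasurable
    · filter_upwards [ae_restrict_mem measurableSet_Ioi] with s hs
      have hs : R < s := hs
      have hs0 : 0 < s := by linarith
      have hL : 0 < Real.log s := Real.log_pos (by linarith)
      rw [Real.norm_of_nonneg (by positivity)]
      have e : Real.log s ^ (-(2*a)) = ((Real.log s ^ a)^2)⁻¹ := by
        rw [Real.rpow_neg hL.le, ← Real.rpow_mul_natCast hL.le, mul_comm]
        norm_num
      calc s / f s ^ 2 ≤ s / (C * (s * Real.log s ^ a))^2 := by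
            gcongr
            exact hfC s hs.le
        _ = _ := by
            rw [e]
            have : Real.log s ^ a ≠ 0 := by positivity
            field_simp
  have hint : IntegrableOn (fun s => s / f s ^ 2) (Ioi 1) := by
    rw [← Ioc_union_Ioi_eq_Ioi hR1.le]
    exact hint1.union hint2
  calc _ ≤ ∫⁻ s in Ioi (1:ℝ), ENNReal.ofReal ((-(α+1))⁻¹ * (s / f s ^ 2)) := by
        apply setLIntegral_mono' measurableSet_Ioi
        intro s hs
        exact aux_inner α β hα1 hαβ f hfpos hm s (lt_trans one_pos hs)
    _ < ⊤ := (hint.const_mul _).lintegral_lt_top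
end

section
/- Let n ≥ 2 be an integer, k > 0, and let f : ℝ → ℝ be C¹ with f(t) > 0 and f'(t) ≥ 0 for all t ≥ 1. Assume ∫₁^∞ f(t)^{1−n} (∫₁^t f(s)^{n−3} ds) dt < ∞, and define η(r) = k ∫_r^∞ f(t)^{1−n} (∫₁^t f(s)^{n−3} ds) dt for r ≥ 1. Then for every r > 1, η''(r) (1 + η'(r)²)^{−3/2} + (n−1) (f'(r)/f(r)) η'(r) (1 + η'(r)²)^{−1/2} ≤ 0. -/
open MeasureTheory Set

/-- Under the hypotheses of Statement 4 with moreover `f' ≥ 0` on `[1,∞)`,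
the barrier `η` is a radial supersolution of the minimal graph equation:
`η''(1+η'²)^{-3/2} + (n-1)(f'/f) η' (1+η'²)^{-1/2} ≤ 0` for every `r > 1`. -/
theorem stmt_6 (n : ℕ) (hn : 2 ≤ n) (k : ℝ) (hk : 0 < k)
    (f : ℝ → ℝ) (hf : ContDiff ℝ 1 f)
    (hfpos : ∀ t ≥ (1:ℝ), 0 < f t) (hf' : ∀ t ≥ (1:ℝ), 0 ≤ deriv f t)
    (hint : IntegrableOn
      (fun t => f t ^ (1 - (n : ℝ)) * ∫ s in Ioc (1:ℝ) t, f s ^ ((n : ℝ) - 3))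
      (Ioi (1:ℝ)))
    (η : ℝ → ℝ)
    (hη : ∀ r ≥ (1:ℝ), η r =
      k * ∫ t in Ioi r, f t ^ (1 - (n : ℝ)) * ∫ s in Ioc (1:ℝ) t, f s ^ ((n : ℝ) - 3)) :
    ∀ r > (1:ℝ),
      deriv (deriv η) r * (1 + deriv η r ^ 2) ^ (-(3:ℝ)/2) +
        ((n : ℝ) - 1) * (deriv f r / f r) * deriv η r * (1 + deriv η r ^ 2) ^ (-(1:ℝ)/2)
        ≤ 0 := by
  have hcp : ∀ p : ℝ, ∀ t ≥ (1:ℝ), ContinuousAt (fun s => f s ^ p) t := fun p t ht =>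
    hf.continuous.continuousAt.rpow_const (Or.inl (hfpos t ht).ne')
  have hFTC : ∀ h : ℝ → ℝ, (∀ t > (1:ℝ), ContinuousAt h t) →
      (∀ x > (1:ℝ), IntervalIntegrable h volume 1 x) → ∀ x > (1:ℝ),
      HasDerivAt (fun x => ∫ s in Ioc (1:ℝ) x, h s) (h x) x := by
    intro h hc hi x hx
    have h1 : HasDerivAt (fun x => ∫ s in (1:ℝ)..x, h s) (h x) x := by
      refine intervalIntegral.integral_hasDerivAt_right (hi x hx) ?_ (hc x hx)
      have hco : ContinuousOn h (Ioi 1) := fun t ht => (hc t ht).continuousWithinAt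
      exact hco.stronglyMeasurableAtFilter isOpen_Ioi x hx
    refine h1.congr_of_eventuallyEq ?_
    filter_upwards [Ioi_mem_nhds hx] with y hy
    exact (intervalIntegral.integral_of_le (le_of_lt hy)).symm
  set J : ℝ → ℝ := fun t => ∫ s in Ioc (1:ℝ) t, f s ^ ((n : ℝ) - 3) with hJ
  have hJd : ∀ x > (1:ℝ), HasDerivAt J (f x ^ ((n : ℝ) - 3)) x := by
    refine hFTC (fun s => f s ^ ((n : ℝ) - 3)) (fun t ht => hcp _ t ht.le) ?_
    intro x hx
    refine ContinuousOn.intervalIntegrable fun t ht => ?_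
    rw [uIcc_of_le hx.le] at ht
    exact (hcp _ t ht.1).continuousWithinAt
  have hfd : ∀ x, HasDerivAt f (deriv f x) x := fun x =>
    (hf.differentiable (by norm_num) x).hasDerivAt
  set g : ℝ → ℝ := fun t => f t ^ (1 - (n : ℝ)) * J t with hg
  have hgd : ∀ x > (1:ℝ), HasDerivAt g
      (deriv f x * (1 - (n : ℝ)) * f x ^ (1 - (n : ℝ) - 1) * J x
        + f x ^ (1 - (n : ℝ)) * f x ^ ((n : ℝ) - 3)) x := fun x hx =>
    ((hfd x).rpow_const (Or.inl (hfpos x (le_of_lt hx)).ne')).mul (hJd x hx)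
  have hint' : IntegrableOn g (Ioi 1) := hint
  have hηd : ∀ x > (1:ℝ), HasDerivAt η (-(k * g x)) x := by
    intro x hx
    have h1 := hFTC g (fun t ht => (hgd t ht).continuousAt) (fun x hx => by
      rw [intervalIntegrable_iff_integrableOn_Ioc_of_le (le_of_lt hx)]
      exact hint'.mono_set Ioc_subset_Ioi_self) x hx
    have h2 := (h1.const_sub (∫ t in Ioi (1:ℝ), g t)).const_mul k
    rw [mul_neg] at h2
    refine h2.congr_of_eventuallyEq ?_
    filter_upwards [Ioi_mem_nhds hx] with y hy
    have hy' : (1:ℝ) ≤ y := le_of_lt hy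
    have h3 : ∫ t in Ioi (1:ℝ), g t = (∫ t in Ioc (1:ℝ) y, g t) + ∫ t in Ioi y, g t := by
      rw [← setIntegral_union (Ioc_disjoint_Ioi le_rfl) measurableSet_Ioi
        (hint'.mono_set Ioc_subset_Ioi_self) (hint'.mono_set (Ioi_subset_Ioi hy')),
        Ioc_union_Ioi_eq_Ioi hy']
    rw [hη y hy', h3]
    ring
  intro r hr
  have hfr := hfpos r (le_of_lt hr)
  have e1 : deriv η r = -(k * g r) := (hηd r hr).deriv
  have e2 : deriv (deriv η) r = -(k * (deriv f r * (1 - (n : ℝ)) * f r ^ (1 - (n : ℝ) - 1) * J r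
        + f r ^ (1 - (n : ℝ)) * f r ^ ((n : ℝ) - 3))) := by
    refine HasDerivAt.deriv ?_
    refine (((hgd r hr).const_mul k).neg).congr_of_eventuallyEq ?_
    filter_upwards [Ioi_mem_nhds hr] with y hy
    exact (hηd y hy).deriv
  have hJ0 : 0 ≤ J r := setIntegral_nonneg measurableSet_Ioc
    fun s hs => Real.rpow_nonneg (hfpos s (le_of_lt hs.1)).le _
  have e3 : f r ^ (1 - (n : ℝ) - 1) = f r ^ (1 - (n : ℝ)) / f r := Real.rpow_sub_one hfr.ne' _
  have hA : 0 < 1 + deriv η r ^ 2 := by positivity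
  have e4 : (1 + deriv η r ^ 2) ^ (-(1:ℝ)/2)
      = (1 + deriv η r ^ 2) ^ (-(3:ℝ)/2) * (1 + deriv η r ^ 2) := by
    rw [← Real.rpow_add_one hA.ne']
    norm_num
  have hP : 0 < (1 + deriv η r ^ 2) ^ (-(3:ℝ)/2) := Real.rpow_pos_of_pos hA _
  have hQ : 0 < f r ^ (1 - (n : ℝ)) := Real.rpow_pos_of_pos hfr _
  have hR : 0 < f r ^ ((n : ℝ) - 3) := Real.rpow_pos_of_pos hfr _
  have hn1 : (0:ℝ) ≤ (n:ℝ) - 1 := by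
    have : (2:ℝ) ≤ n := by exact_mod_cast hn
    linarith
  have hD : 0 ≤ deriv f r / f r := div_nonneg (hf' r (le_of_lt hr)) hfr.le
  rw [e4]
  generalize (1 + deriv η r ^ 2) ^ (-(3:ℝ)/2) = P at hP
  rw [e2, e1, e3]
  have hgr : g r = f r ^ (1 - (n : ℝ)) * J r := rfl
  rw [hgr]
  generalize f r ^ (1 - (n : ℝ)) = Q at hQ
  generalize f r ^ ((n : ℝ) - 3) = R at hR
  generalize J r = j at hJ0
  have key : 0 ≤ P * (k * (Q * R) + ((n:ℝ) - 1) * (deriv f r / f r) * (k * (Q * j))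
      * (k * (Q * j)) ^ 2) := by positivity
  refine le_trans (le_of_eq ?_) (neg_nonpos.mpr key)
  ring
end

section
/- Let α > 2, u > 0, R > 0, g ≥ 0 and 0 ≤ d ≤ R be real numbers, and set W = √(1 + g²). If W > α/√(α² − 4) and W > 8αu/R, then (g/(4uW) − 2d/(R²W))² > 1/(16 u² α²). -/
/-- the elementary algebraic inequality behind the interior gradient estimate
(Proposition 3.1): if `W = √(1+g²)` satisfies `W > α/√(α²-4)` and `W > 8αu/R`, then
`(g/(4uW) - 2d/(R²W))² > 1/(16u²α²)`. -/
theorem stmt_8 (α u R g d W : ℝ) (hα : 2 < α) (hu : 0 < u) (hR : 0 < R)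
    (hg : 0 ≤ g) (hd0 : 0 ≤ d) (hdR : d ≤ R)
    (hW : W = Real.sqrt (1 + g ^ 2))
    (hW1 : α / Real.sqrt (α ^ 2 - 4) < W) (hW2 : 8 * α * u / R < W) :
    1 / (16 * u ^ 2 * α ^ 2) < (g / (4 * u * W) - 2 * d / (R ^ 2 * W)) ^ 2 := by
  have hα0 : 0 < α := by linarith
  have hs : 0 < α ^ 2 - 4 := by nlinarith
  have hsq : 0 < Real.sqrt (α ^ 2 - 4) := Real.sqrt_pos.mpr hs
  have hss : Real.sqrt (α ^ 2 - 4) ^ 2 = α ^ 2 - 4 := Real.sq_sqrt hs.le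
  have hWp : 0 < W := lt_trans (by positivity) hW1
  have hWW : W ^ 2 = 1 + g ^ 2 := by rw [hW]; exact Real.sq_sqrt (by positivity)
  rw [div_lt_iff₀ hsq] at hW1
  rw [div_lt_iff₀ hR] at hW2
  have h1 : α ^ 2 < W ^ 2 * (α ^ 2 - 4) := by
    rw [← hss, ← mul_pow]
    exact pow_lt_pow_left₀ hW1 hα0.le two_ne_zero
  have h2 : 2 * W < g * α := by
    apply lt_of_pow_lt_pow_left₀ 2 (by positivity)
    nlinarith
  have h3 : 1 / (2 * u * α) < g / (4 * u * W) := by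
    rw [div_lt_div_iff₀ (by positivity) (by positivity)]
    nlinarith [mul_lt_mul_of_pos_left h2 hu]
  have h4 : 2 * d / (R ^ 2 * W) < 1 / (4 * u * α) := by
    rw [div_lt_div_iff₀ (by positivity) (by positivity)]
    have a : d * (8 * α * u) ≤ R * (8 * α * u) :=
      mul_le_mul_of_nonneg_right hdR (by positivity)
    have b := mul_lt_mul_of_pos_left hW2 hR
    nlinarith
  have h5 : 1 / (2 * u * α) = 1 / (4 * u * α) + 1 / (4 * u * α) := by
    field_simp
    norm_num
  have h6 : 1 / (16 * u ^ 2 * α ^ 2) = (1 / (4 * u * α)) ^ 2 := by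
    field_simp
    norm_num
  rw [h6]
  exact pow_lt_pow_left₀ (by linarith) (by positivity) two_ne_zero
end

section
/- Let α < −1 be real, set β = −2 − α, let c > 0 be real, and define φ(r) = r (log r)^{c} for r > 1. Then ∫₂^∞ φ(s)^{β} (∫_s^∞ φ(t)^{α} dt) ds < ∞ if and only if c > 1/2. -/
open MeasureTheory Set

lemma aux_log_image : Real.log '' Ioi (2:ℝ) = Ioi (Real.log 2) := by
  ext y
  constructor
  · rintro ⟨x, hx, rfl⟩
    exact Real.log_lt_log (by norm_num) hx
  · intro hy
    refine ⟨Real.exp y, ?_, Real.log_exp y⟩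
    exact (Real.log_lt_iff_lt_exp (by norm_num)).1 hy

lemma aux_J (c : ℝ) :
    (∫⁻ s in Ioi (2:ℝ), ENNReal.ofReal (s⁻¹ * Real.log s ^ (-2 * c))) < ⊤ ↔ 1 / 2 < c := by
  have h2 : 0 < Real.log 2 := Real.log_pos (by norm_num)
  have h := lintegral_image_eq_lintegral_abs_deriv_mul (s := Ioi (2:ℝ)) (f := Real.log)
    (f' := fun x => x⁻¹) measurableSet_Ioi
    (fun x hx => (Real.hasDerivAt_log (by have : (2:ℝ) < x := hx; positivity)).hasDerivWithinAt)
    (fun x hx y hy hxy => by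
      have hx' : (2:ℝ) < x := hx
      have hy' : (2:ℝ) < y := hy
      exact Real.log_injOn_pos (show (0:ℝ) < x by linarith) (show (0:ℝ) < y by linarith) hxy)
    (fun u => ENNReal.ofReal (u ^ (-2 * c)))
  have h' : (∫⁻ s in Ioi (2:ℝ), ENNReal.ofReal (s⁻¹ * Real.log s ^ (-2 * c))) =
      ∫⁻ u in Ioi (Real.log 2), ENNReal.ofReal (u ^ (-2 * c)) := by
    rw [← aux_log_image, h]
    refine setLIntegral_congr_fun measurableSet_Ioi fun x hx => ?_
    have hx' : (2:ℝ) < x := hx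
    have : 0 < x⁻¹ := by positivity
    simp only [abs_of_pos this]
    rw [ENNReal.ofReal_mul this.le]
  rw [h']
  have h3 := integrableOn_Ioi_rpow_iff (s := -2 * c) h2
  have h4 : IntegrableOn (fun u : ℝ => u ^ (-2 * c)) (Ioi (Real.log 2)) ↔
      (∫⁻ u in Ioi (Real.log 2), ENNReal.ofReal (u ^ (-2 * c))) < ⊤ := by
    rw [IntegrableOn, Integrable, hasFiniteIntegral_iff_ofReal]
    · constructor
      · exact fun h => h.2
      · exact fun h => ⟨by fun_prop, h⟩
    · filter_upwards [ae_restrict_mem measurableSet_Ioi] with u hu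
      have : Real.log 2 < u := hu
      exact Real.rpow_nonneg (by linarith) _
  rw [← h4, h3]
  constructor <;> intro <;> linarith

lemma aux_upper (α β c s : ℝ) (hα : α < -1) (hβ : β = -2 - α) (hc : 0 < c) (hs : 2 < s) :
    ENNReal.ofReal ((s * Real.log s ^ c) ^ β) *
          (∫⁻ t in Ioi s, ENNReal.ofReal ((t * Real.log t ^ c) ^ α)) ≤
      ENNReal.ofReal (-1 / (α + 1)) * ENNReal.ofReal (s⁻¹ * Real.log s ^ (-2 * c)) := by
  have hs0 : 0 < s := by linarith
  have hl : 0 < Real.log s := Real.log_pos (by linarith)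
  have hi : (∫⁻ t in Ioi s, ENNReal.ofReal ((t * Real.log t ^ c) ^ α)) ≤
      ENNReal.ofReal ((Real.log s ^ c) ^ α * (-s ^ (α + 1) / (α + 1))) := by
    calc _ ≤ ∫⁻ t in Ioi s, ENNReal.ofReal ((Real.log s ^ c) ^ α * t ^ α) := by
          refine setLIntegral_mono' measurableSet_Ioi fun t ht => ?_
          have ht' : s < t := ht
          have ht0 : 0 < t := by linarith
          have hlt : Real.log s ≤ Real.log t := Real.log_le_log hs0 ht'.le
          apply ENNReal.ofReal_le_ofReal
          rw [Real.mul_rpow ht0.le (Real.rpow_nonneg (by linarith) _), mul_comm]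
          refine mul_le_mul_of_nonneg_right ?_ (Real.rpow_nonneg ht0.le _)
          exact Real.rpow_le_rpow_of_nonpos (Real.rpow_pos_of_pos hl _)
            (Real.rpow_le_rpow hl.le hlt hc.le) (by linarith)
      _ = _ := by
          rw [← integral_Ioi_rpow_of_lt hα hs0, ← integral_const_mul,
            ofReal_integral_eq_lintegral_ofReal]
          · exact (integrableOn_Ioi_rpow_of_lt hα hs0).const_mul _
          · filter_upwards [ae_restrict_mem measurableSet_Ioi] with u hu
            have : s < u := hu
            have : 0 < u := by linarith
            simp only [Pi.zero_apply]
            positivity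
  refine (mul_le_mul_right hi _).trans ?_
  have h1 : 0 < -1 / (α + 1) := div_pos_of_neg_of_neg (by norm_num) (by linarith)
  rw [← ENNReal.ofReal_mul (by positivity), ← ENNReal.ofReal_mul h1.le]
  apply le_of_eq
  congr 1
  rw [Real.mul_rpow hs0.le (by positivity), ← Real.rpow_mul hl.le, ← Real.rpow_mul hl.le,
    ← Real.rpow_neg_one s]
  have e1 : s ^ (-1:ℝ) = s ^ β * s ^ (α + 1) := by
    rw [← Real.rpow_add hs0]; congr 1; rw [hβ]; ring
  have e2 : Real.log s ^ (-2 * c) = Real.log s ^ (c * β) * Real.log s ^ (c * α) := by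
    rw [← Real.rpow_add hl]; congr 1; rw [hβ]; ring
  rw [e1, e2]; ring

lemma aux_lower_s15 (α β c s : ℝ) (hα : α < -1) (hβ : β = -2 - α) (hc : 0 < c) (hs : 2 < s) :
    ENNReal.ofReal ((2:ℝ) ^ α * (2 ^ c) ^ α) * ENNReal.ofReal (s⁻¹ * Real.log s ^ (-2 * c)) ≤
    ENNReal.ofReal ((s * Real.log s ^ c) ^ β) *
          (∫⁻ t in Ioi s, ENNReal.ofReal ((t * Real.log t ^ c) ^ α)) := by
  have hs0 : 0 < s := by linarith
  have hl : 0 < Real.log s := Real.log_pos (by linarith)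
  have hi : ENNReal.ofReal (((2 * s) * (2 * Real.log s) ^ c) ^ α * s) ≤
      (∫⁻ t in Ioi s, ENNReal.ofReal ((t * Real.log t ^ c) ^ α)) := by
    calc _ = ∫⁻ t in Ioc s (2 * s), ENNReal.ofReal (((2 * s) * (2 * Real.log s) ^ c) ^ α) := by
          rw [setLIntegral_const, Real.volume_Ioc, ENNReal.ofReal_mul (by positivity)]
          congr 2; ring
      _ ≤ ∫⁻ t in Ioc s (2 * s), ENNReal.ofReal ((t * Real.log t ^ c) ^ α) := by
          refine setLIntegral_mono' measurableSet_Ioc fun t ht => ?_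
          have ht0 : 0 < t := hs0.trans ht.1
          have hlt0 : 0 < Real.log t := Real.log_pos (by linarith [ht.1])
          have hlt : Real.log t ≤ 2 * Real.log s := by
            have h1 : Real.log t ≤ Real.log (2 * s) := Real.log_le_log ht0 ht.2
            rw [Real.log_mul (by norm_num) hs0.ne'] at h1
            have h2 : Real.log 2 ≤ Real.log s := Real.log_le_log (by norm_num) hs.le
            linarith
          apply ENNReal.ofReal_le_ofReal
          refine Real.rpow_le_rpow_of_nonpos (by positivity) ?_ (by linarith)
          exact mul_le_mul ht.2 (Real.rpow_le_rpow hlt0.le hlt hc.le) (by positivity)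
            (by positivity)
      _ ≤ _ := lintegral_mono_set Ioc_subset_Ioi_self
  refine le_trans ?_ (mul_le_mul_right hi _)
  rw [← ENNReal.ofReal_mul (by positivity), ← ENNReal.ofReal_mul (by positivity)]
  apply le_of_eq
  congr 1
  rw [Real.mul_rpow hs0.le (by positivity), Real.mul_rpow (by positivity) (by positivity),
    Real.mul_rpow (by positivity) hs0.le, Real.mul_rpow (by positivity) hl.le,
    Real.mul_rpow (by positivity) (by positivity),
    ← Real.rpow_mul hl.le, ← Real.rpow_mul hl.le, ← Real.rpow_neg_one s]
  have e1 : s ^ (-1:ℝ) = s ^ β * s ^ α * s := by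
    rw [← Real.rpow_add hs0, ← Real.rpow_add_one hs0.ne']; congr 1; rw [hβ]; ring
  have e2 : Real.log s ^ (-2 * c) = Real.log s ^ (c * β) * Real.log s ^ (c * α) := by
    rw [← Real.rpow_add hl]; congr 1; rw [hβ]; ring
  rw [e1, e2]; ring

/-- for `α < -1`, `β = -2 - α`, `c > 0` and `φ(r) = r (log r)^c`, the double
integral `∫₂^∞ φ(s)^β (∫ₛ^∞ φ(t)^α dt) ds` is finite if and only if `c > 1/2`. -/
theorem stmt_15 (α β c : ℝ) (hα : α < -1) (hβ : β = -2 - α) (hc : 0 < c) :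
    (∫⁻ s in Ioi (2:ℝ),
        ENNReal.ofReal ((s * Real.log s ^ c) ^ β) *
          ∫⁻ t in Ioi s, ENNReal.ofReal ((t * Real.log t ^ c) ^ α)) < ⊤ ↔
      1 / 2 < c := by
  rw [← aux_J c]
  constructor
  · intro h
    have h1 := (setLIntegral_mono' measurableSet_Ioi
      fun s hs => aux_lower_s15 α β c s hα hβ hc hs).trans_lt h
    rw [lintegral_const_mul' _ _ ENNReal.ofReal_ne_top] at h1
    refine ENNReal.lt_top_of_mul_ne_top_right h1.ne ?_
    have : (0:ℝ) < (2:ℝ) ^ α * (2 ^ c) ^ α := by positivity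
    simpa using this
  · intro h
    refine (setLIntegral_mono' measurableSet_Ioi
      fun s hs => aux_upper α β c s hα hβ hc hs).trans_lt ?_
    rw [lintegral_const_mul' _ _ ENNReal.ofReal_ne_top]
    exact ENNReal.mul_lt_top ENNReal.ofReal_lt_top h
end
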